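/- arXiv:math/0309201 — 2 statements merged into one kernel-verified Lean document; each statement's English description precedes it below -/
import Mathlib

section
/- Let L₂(q) = ∏_{n≥0} 1/((1-q^{5n+1})(1-q^{5n+4})). Then L₂ satisfies the ODE (q d/dq)² F + (-1/5 + 4∑_{n≥1}σ₁(n)q^n)(q d/dq) F - (1/15)·(∑_{n≥1}σ₁(n)q^n + 11∑_{n≥1}σ₃(n)q^n)·F = 0. -/
open scoped BigOperators

/-!
Put `A(q) = ∑ σ±(n) qⁿ`, where `σ±(n)` is the sum of the divisors of `n` congruent to `±1` modulo
`5`. Logarithmic differentiation of the product gives `q L₂' = A L₂`, so the differential equation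
for `L₂` amounts to the Riccati equation
`q A' + A² - A / 5 + 4 (∑ σ₁(n) qⁿ) A = (∑ σ₁(n) qⁿ + 11 ∑ σ₃(n) qⁿ) / 15`,
that is, to a convolution identity for divisor sums. The convolutions are sums over the positive
solutions of `a x + b y = n`, and the identity follows in the manner of Liouville: a Euclidean step
`(a, b, x, y) ↦ (a + b, b, x, y - x)` makes the sum of `h(a, b) - h(a + b, b)` telescope to sums
over divisors of `n`, and one takes for `h` a quadratic form whose coefficients depend on residues
modulo `5`.
-/

open Finset Filter Topology
open scoped ArithmeticFunction.sigma

theorem sum_eq_two_nsmul_sum_lt_add_sum_eq {ι M α : Type*} [AddCommMonoid M] [LinearOrder α]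
    {s : Finset ι} {f : ι → M} {τ : ι → ι} (hτ : τ.Involutive) (hs : ∀ t ∈ s, τ t ∈ s)
    (hf : ∀ t ∈ s, f (τ t) = f t) (u : ι → α) :
    ∑ t ∈ s, f t = 2 • ∑ t ∈ s with u (τ t) < u t, f t + ∑ t ∈ s with u (τ t) = u t, f t := by
  have hgt : ∑ t ∈ s with u t < u (τ t), f t = ∑ t ∈ s with u (τ t) < u t, f t := by
    refine sum_nbij' τ τ ?_ ?_ (fun t _ ↦ hτ t) (fun t _ ↦ hτ t) ?_ <;>
      simp +contextual [mem_filter, hτ _, hs, hf]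
  have hsplit : ∑ t ∈ s, f t = ∑ t ∈ s with u (τ t) < u t, f t +
      ∑ t ∈ s with u t < u (τ t), f t + ∑ t ∈ s with u (τ t) = u t, f t := by
    simp only [sum_filter, ← sum_add_distrib]
    refine sum_congr rfl fun t _ ↦ ?_
    rcases lt_trichotomy (u (τ t)) (u t) with h | h | h
    · simp [h, h.ne, h.not_gt]
    · simp [h]
    · simp [h, h.ne', h.not_gt]
  rw [hsplit, hgt, two_nsmul]

/-- The solutions `((a, b), (x, y))` in positive integers of `a * x + b * y = n`. -/
def posSolutions (n : ℕ) : Finset ((ℕ × ℕ) × ℕ × ℕ) :=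
  {t ∈ (Icc 1 n ×ˢ Icc 1 n) ×ˢ Icc 1 n ×ˢ Icc 1 n | t.1.1 * t.2.1 + t.1.2 * t.2.2 = n}

theorem mem_posSolutions {n a b x y : ℕ} :
    ((a, b), (x, y)) ∈ posSolutions n ↔
      (0 < a ∧ 0 < b ∧ 0 < x ∧ 0 < y) ∧ a * x + b * y = n := by
  simp only [posSolutions, mem_filter, mem_product, mem_Icc]
  refine ⟨by grind, fun ⟨⟨ha, hb, hx, hy⟩, h⟩ ↦ ⟨?_, h⟩⟩
  have := Nat.le_mul_of_pos_right a hx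
  have := Nat.le_mul_of_pos_left x ha
  have := Nat.le_mul_of_pos_right b hy
  have := Nat.le_mul_of_pos_left y hb
  omega

section LiouvilleSum

variable {M : Type*} [AddCommMonoid M]

theorem sum_posSolutions_eq_two_nsmul_sum_lt_add_sum_eq {f : ℕ → ℕ → M}
    (hf : ∀ a b, f a b = f b a) (u : (ℕ × ℕ) × ℕ × ℕ → ℕ) (n : ℕ) :
    ∑ t ∈ posSolutions n, f t.1.1 t.1.2 =
      2 • ∑ t ∈ posSolutions n with u (t.1.swap, t.2.swap) < u t, f t.1.1 t.1.2 +
        ∑ t ∈ posSolutions n with u (t.1.swap, t.2.swap) = u t, f t.1.1 t.1.2 := by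
  refine sum_eq_two_nsmul_sum_lt_add_sum_eq (f := fun t ↦ f t.1.1 t.1.2)
    (τ := fun t ↦ (t.1.swap, t.2.swap)) (fun _ ↦ rfl) ?_ (fun _ _ ↦ hf _ _) u
  rintro ⟨⟨a, b⟩, x, y⟩ h
  simp only [Prod.swap_prod_mk, mem_posSolutions] at h ⊢
  omega

-- One step of the Euclidean algorithm is the bijection `a * x + b * y = (a + b) * x + b * (y - x)`.
theorem sum_posSolutions_snd_lt_fst (f : ℕ → ℕ → M) (n : ℕ) :
    ∑ t ∈ posSolutions n with t.1.2 < t.1.1, f t.1.1 t.1.2 =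
      ∑ t ∈ posSolutions n with t.2.1 < t.2.2, f (t.1.1 + t.1.2) t.1.2 := by
  refine (sum_nbij' (fun t ↦ ((t.1.1 + t.1.2, t.1.2), (t.2.1, t.2.2 - t.2.1)))
    (fun t ↦ ((t.1.1 - t.1.2, t.1.2), (t.2.1, t.2.1 + t.2.2))) ?_ ?_ ?_ ?_ fun _ _ ↦ rfl).symm
  all_goals
    rintro ⟨⟨a, b⟩, x, y⟩ h
    simp only [mem_filter, mem_posSolutions, Prod.mk.injEq] at h ⊢
    obtain ⟨⟨hpos, h⟩, hlt⟩ := h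
  · obtain ⟨c, rfl⟩ := Nat.exists_eq_add_of_lt hlt
    rw [← h, show x + c + 1 - x = c + 1 by omega]
    exact ⟨⟨by omega, by ring⟩, by omega⟩
  · obtain ⟨c, rfl⟩ := Nat.exists_eq_add_of_lt hlt
    rw [← h, show b + c + 1 - b = c + 1 by omega]
    exact ⟨⟨by omega, by ring⟩, by omega⟩
  all_goals simp; omega

theorem sum_posSolutions_variables_eq (f : ℕ → ℕ → ℕ → M) (n : ℕ) :
    ∑ t ∈ posSolutions n with t.2.1 = t.2.2, f t.2.1 (t.1.1 + t.1.2) t.1.2 =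
      ∑ p ∈ n.divisorsAntidiagonal, ∑ l ∈ Ico 1 p.1, f p.2 p.1 l := by
  rw [sum_sigma']
  refine sum_nbij' (fun t ↦ (⟨(t.1.1 + t.1.2, t.2.1), t.1.2⟩ : Σ _ : ℕ × ℕ, ℕ))
    (fun s ↦ ((s.1.1 - s.2, s.2), (s.1.2, s.1.2))) ?_ ?_ ?_ ?_ fun _ _ ↦ rfl
  · rintro ⟨⟨a, b⟩, x, y⟩ h
    simp only [mem_filter, mem_posSolutions, mem_sigma, Nat.mem_divisorsAntidiagonal,
      mem_Ico] at h ⊢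
    obtain ⟨⟨⟨ha, hb, hx, -⟩, rfl⟩, rfl⟩ := h
    exact ⟨⟨by ring, by positivity⟩, by omega⟩
  · rintro ⟨⟨d, e⟩, l⟩ h
    simp only [mem_filter, mem_posSolutions, mem_sigma, Nat.mem_divisorsAntidiagonal,
      mem_Ico] at h ⊢
    obtain ⟨⟨rfl, hn⟩, hl, hld⟩ := h
    have he : 0 < e := Nat.pos_of_ne_zero (right_ne_zero_of_mul hn)
    exact ⟨⟨⟨by omega, hl, he, he⟩, by rw [← Nat.add_mul, Nat.sub_add_cancel hld.le]⟩, trivial⟩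
  · rintro ⟨⟨a, b⟩, x, y⟩ h
    simpa using (mem_filter.mp h).2
  · rintro ⟨⟨d, e⟩, l⟩ h
    simp [Nat.sub_add_cancel (mem_Ico.mp (mem_sigma.mp h).2).2.le]

theorem sum_posSolutions_coefficients_eq (f : ℕ → M) (n : ℕ) :
    ∑ t ∈ posSolutions n with t.1.1 = t.1.2, f t.1.1 =
      ∑ p ∈ n.divisorsAntidiagonal, (p.1 - 1) • f p.2 := by
  have hdual : ∑ t ∈ posSolutions n with t.1.1 = t.1.2, f t.1.1 =
      ∑ t ∈ posSolutions n with t.2.1 = t.2.2, f t.2.1 := by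
    refine sum_nbij' Prod.swap Prod.swap ?_ ?_ (fun _ _ ↦ rfl) (fun _ _ ↦ rfl) fun _ _ ↦ rfl
    all_goals
      rintro ⟨⟨a, b⟩, x, y⟩ h
      simp only [mem_filter, Prod.swap_prod_mk, mem_posSolutions] at h ⊢
      grind
  rw [hdual, sum_posSolutions_variables_eq fun x _ _ ↦ f x]
  simp

end LiouvilleSum

theorem sum_posSolutions_sub_add_eq_sum_divisorsAntidiagonal {M : Type*} [AddCommGroup M]
    {h : ℕ → ℕ → M} (h_symm : ∀ a b, h a b = h b a)
    (h_add : ∀ a b, h (a + b) a = h (a + b) b) (n : ℕ) :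
    ∑ t ∈ posSolutions n, (h t.1.1 t.1.2 - h (t.1.1 + t.1.2) t.1.2) =
      ∑ p ∈ n.divisorsAntidiagonal, ((p.1 - 1) • h p.2 p.2 - ∑ l ∈ Ico 1 p.1, h p.1 l) := by
  have hfst := sum_posSolutions_eq_two_nsmul_sum_lt_add_sum_eq h_symm (fun t ↦ t.1.1) n
  have hsnd := sum_posSolutions_eq_two_nsmul_sum_lt_add_sum_eq (f := fun a b ↦ h (a + b) b)
    (fun a b ↦ by rw [← h_add, add_comm]) (fun t ↦ t.2.2) n
  have hdiag : ∑ t ∈ posSolutions n with t.1.2 = t.1.1, h t.1.1 t.1.2 =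
      ∑ p ∈ n.divisorsAntidiagonal, (p.1 - 1) • h p.2 p.2 := by
    rw [← sum_posSolutions_coefficients_eq fun a ↦ h a a]
    refine sum_congr (filter_congr fun _ _ ↦ eq_comm) fun t ht ↦ ?_
    rw [(mem_filter.mp ht).2]
  simp only [Prod.fst_swap, Prod.snd_swap] at hfst hsnd
  rw [sum_sub_distrib, hfst, hsnd, sum_posSolutions_snd_lt_fst, hdiag,
    sum_posSolutions_variables_eq fun _ ↦ h, sum_sub_distrib]
  abel

theorem sum_antidiagonal_sum_divisors_mul {R : Type*} [NonUnitalNonAssocSemiring R]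
    (f g : ℕ → R) (n : ℕ) :
    ∑ p ∈ antidiagonal n, (∑ d ∈ p.1.divisors, f d) * ∑ d ∈ p.2.divisors, g d =
      ∑ t ∈ posSolutions n, f t.1.1 * g t.1.2 := by
  simp_rw [← Nat.sum_divisorsAntidiagonal fun d _ ↦ f d,
    ← Nat.sum_divisorsAntidiagonal fun d _ ↦ g d, sum_mul_sum, ← sum_product', sum_sigma']
  refine sum_nbij' (fun s ↦ ((s.2.1.1, s.2.2.1), (s.2.1.2, s.2.2.2)))
    (fun t ↦ ⟨(t.1.1 * t.2.1, t.1.2 * t.2.2), ((t.1.1, t.2.1), (t.1.2, t.2.2))⟩)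
    ?_ ?_ ?_ (fun _ _ ↦ rfl) fun _ _ ↦ rfl
  · rintro ⟨⟨i, j⟩, ⟨a, x⟩, b, y⟩ h
    simp only [mem_sigma, HasAntidiagonal.mem_antidiagonal, mem_product,
      Nat.mem_divisorsAntidiagonal] at h
    obtain ⟨rfl, ⟨rfl, hax⟩, rfl, hby⟩ := h
    simp only [ne_eq, mul_eq_zero, not_or, ← Nat.pos_iff_ne_zero] at hax hby
    exact mem_posSolutions.mpr ⟨⟨hax.1, hby.1, hax.2, hby.2⟩, rfl⟩
  · rintro ⟨⟨a, b⟩, x, y⟩ h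
    obtain ⟨⟨ha, hb, hx, hy⟩, hn⟩ := mem_posSolutions.mp h
    simp only [mem_sigma, HasAntidiagonal.mem_antidiagonal, mem_product,
      Nat.mem_divisorsAntidiagonal]
    exact ⟨hn, ⟨trivial, by positivity⟩, trivial, by positivity⟩
  · rintro ⟨⟨i, j⟩, ⟨a, x⟩, b, y⟩ h
    simp only [mem_sigma, mem_product, Nat.mem_divisorsAntidiagonal] at h
    obtain ⟨-, ⟨rfl, -⟩, rfl, -⟩ := h
    rfl

/-- The indicator function of the residue classes `±1` modulo `5`. -/
def pmOne (r : ZMod 5) : ℤ := if r = 1 ∨ r = -1 then 1 else 0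

/-- Five times the coefficient of `a ^ 2` in `quadForm a b`, for `a` and `b` in the residue classes
`r` and `s`. -/
def sqCoeff (r s : ZMod 5) : ℤ := if s = 0 then -5 * pmOne r else -2 - 6 * pmOne s

/-- Five times the coefficient of `a * b` in `quadForm a b`, for `a` and `b` in the residue classes
`r` and `s`. It is determined by `sqCoeff`, because `quadForm a b - quadForm (a + b) b` must not
contain `b ^ 2`. -/
def mulCoeff (r s : ZMod 5) : ℤ := sqCoeff s (r - s) - sqCoeff s r - sqCoeff r s

/-- A symmetric quadratic form whose coefficients depend on residues modulo `5`. They are chosen so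
that `quadForm a b - quadForm (a + b) b` is a multiple of `a * b`, and the coefficient of that
multiple reproduces the products of divisor sums in the Riccati equation. -/
def quadForm (a b : ℕ) : ℚ :=
  (sqCoeff a b * a ^ 2 + mulCoeff a b * (a * b) + sqCoeff b a * b ^ 2) / 5

theorem quadForm_comm (a b : ℕ) : quadForm a b = quadForm b a := by
  have h : ∀ r s, mulCoeff r s = mulCoeff s r := by decide
  rw [quadForm, quadForm, h a b]
  ring

theorem quadForm_self (a : ℕ) : quadForm a a = -pmOne a * a ^ 2 := by
  have h : ∀ r, sqCoeff r r + mulCoeff r r + sqCoeff r r = -5 * pmOne r := by decide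
  have h' : (sqCoeff a a + mulCoeff a a + sqCoeff a a : ℚ) = -5 * pmOne a := mod_cast h a
  rw [quadForm]
  linear_combination (a : ℚ) ^ 2 / 5 * h'

theorem quadForm_zero_right (a : ℕ) : quadForm a 0 = -pmOne a * a ^ 2 := by
  simp [quadForm, sqCoeff]
  ring

theorem quadForm_sub_quadForm_add (a b : ℕ) :
    quadForm a b - quadForm (a + b) b =
      (pmOne a * pmOne b + 2 * pmOne a + 2 * pmOne b) * (a * b) := by
  have hsq : ∀ r s, sqCoeff r s = sqCoeff (r + s) s := by decide
  have hmul : ∀ r s, mulCoeff r s - 2 * sqCoeff (r + s) s - mulCoeff (r + s) s =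
    5 * (pmOne r * pmOne s + 2 * pmOne r + 2 * pmOne s) := by decide
  have hsq' : ∀ r s, sqCoeff s r = sqCoeff (r + s) s + mulCoeff (r + s) s +
    sqCoeff s (r + s) := by decide
  qify at hsq hmul hsq'
  simp only [quadForm, Nat.cast_add]
  linear_combination
    (a : ℚ) ^ 2 / 5 * hsq a b + (a * b : ℚ) / 5 * hmul a b + (b : ℚ) ^ 2 / 5 * hsq' a b

theorem quadForm_add_self (a b : ℕ) : quadForm (a + b) a = quadForm (a + b) b := by
  have hab := quadForm_sub_quadForm_add a b
  have hba := quadForm_sub_quadForm_add b a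
  rw [quadForm_comm b a, add_comm b a] at hba
  linear_combination hab - hba

theorem natCast_five_mul_add_zmod_five (k r : ℕ) : ((5 * k + r : ℕ) : ZMod 5) = r := by
  rw [Nat.cast_add, Nat.cast_mul, ZMod.natCast_self, zero_mul, zero_add]

theorem sum_range_five_mul_quadForm (d k : ℕ) :
    ∑ l ∈ range (5 * k), quadForm d l =
      (∑ j ∈ range 5, (sqCoeff d j * (k * d ^ 2) +
        mulCoeff d j * d * (5 * (k * (k - 1) / 2) + j * k) +
        sqCoeff j d * (25 * (k * (k - 1) * (2 * k - 1) / 6) + 10 * j * (k * (k - 1) / 2) +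
          j ^ 2 * k) : ℚ)) / 5 := by
  induction k with
  | zero => simp
  | succ k ih =>
    rw [mul_add_one, sum_range_add, ih, sum_div, sum_div, ← sum_add_distrib]
    refine sum_congr rfl fun j _ ↦ ?_
    rw [quadForm, natCast_five_mul_add_zmod_five]
    push_cast
    ring

theorem sum_range_quadForm (d : ℕ) :
    ∑ l ∈ range d, quadForm d l = -(pmOne d * d / 5 + (d + 11 * d ^ 3) / 15) := by
  obtain ⟨k, r, hr, rfl⟩ : ∃ k r, r < 5 ∧ d = 5 * k + r :=
    ⟨d / 5, d % 5, Nat.mod_lt _ (by norm_num), (Nat.div_add_mod d 5).symm⟩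
  rw [sum_range_add, sum_range_five_mul_quadForm]
  simp_rw [quadForm, natCast_five_mul_add_zmod_five]
  interval_cases r <;> simp +decide [sum_range_succ, sqCoeff, mulCoeff, pmOne] <;> ring

theorem sum_Ico_one_quadForm {d : ℕ} (hd : 0 < d) :
    ∑ l ∈ Ico 1 d, quadForm d l =
      pmOne d * d ^ 2 - (pmOne d * d / 5 + (d + 11 * d ^ 3) / 15) := by
  have h := sum_range_quadForm d
  rw [range_eq_Ico, sum_eq_sum_Ico_succ_bot hd, quadForm_zero_right, zero_add] at h
  linear_combination h

/-- The natural numbers congruent to `±1` modulo `5`. -/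
def pmOneMod5 : Set ℕ := {m | (m : ZMod 5) = 1 ∨ (m : ZMod 5) = -1}

/-- The sum of the divisors of `n` that lie in `S`. -/
noncomputable def sigmaOn (S : Set ℕ) (n : ℕ) : ℕ := ∑ d ∈ n.divisors, S.indicator id d

theorem cast_sigmaOn_pmOneMod5 (n : ℕ) :
    (sigmaOn pmOneMod5 n : ℚ) = ∑ d ∈ n.divisors, pmOne d * (d : ℚ) := by
  rw [sigmaOn, Nat.cast_sum]
  refine sum_congr rfl fun d _ ↦ ?_
  by_cases h : (d : ZMod 5) = 1 ∨ (d : ZMod 5) = -1 <;> simp [pmOneMod5, pmOne, h]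

theorem sum_posSolutions_pmOne (n : ℕ) :
    ∑ t ∈ posSolutions n,
        (pmOne t.1.1 * pmOne t.1.2 + 2 * pmOne t.1.1 + 2 * pmOne t.1.2 : ℚ) * (t.1.1 * t.1.2) =
      ∑ p ∈ antidiagonal n, (sigmaOn pmOneMod5 p.1 : ℚ) * sigmaOn pmOneMod5 p.2 +
        4 * ∑ p ∈ antidiagonal n, (σ 1 p.1 : ℚ) * sigmaOn pmOneMod5 p.2 := by
  have hswap : ∑ p ∈ antidiagonal n, (σ 1 p.1 : ℚ) * sigmaOn pmOneMod5 p.2 =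
      ∑ p ∈ antidiagonal n, (sigmaOn pmOneMod5 p.1 : ℚ) * σ 1 p.2 := by
    rw [← Finset.Nat.sum_antidiagonal_swap]
    exact sum_congr rfl fun p _ ↦ mul_comm _ _
  have hsplit : 4 * ∑ p ∈ antidiagonal n, (σ 1 p.1 : ℚ) * sigmaOn pmOneMod5 p.2 =
      2 * ∑ p ∈ antidiagonal n, (sigmaOn pmOneMod5 p.1 : ℚ) * σ 1 p.2 +
        2 * ∑ p ∈ antidiagonal n, (σ 1 p.1 : ℚ) * sigmaOn pmOneMod5 p.2 := by
    rw [← hswap]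
    ring
  rw [hsplit]
  simp only [cast_sigmaOn_pmOneMod5, ArithmeticFunction.sigma_one_apply, Nat.cast_sum,
    sum_antidiagonal_sum_divisors_mul]
  simp only [mul_sum, ← sum_add_distrib]
  exact sum_congr rfl fun t _ ↦ by ring

theorem sum_divisorsAntidiagonal_quadForm (n : ℕ) :
    ∑ p ∈ n.divisorsAntidiagonal,
        ((p.1 - 1) • quadForm p.2 p.2 - ∑ l ∈ Ico 1 p.1, quadForm p.1 l) =
      sigmaOn pmOneMod5 n / 5 + (σ 1 n + 11 * σ 3 n) / 15 - n * sigmaOn pmOneMod5 n := by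
  have hself : ∑ p ∈ n.divisorsAntidiagonal, (p.1 - 1) • quadForm p.2 p.2 =
      ∑ d ∈ n.divisors, (pmOne d * d ^ 2 - n * (pmOne d * d) : ℚ) := by
    rw [← Nat.sum_divisorsAntidiagonal' fun _ d ↦ (pmOne d * d ^ 2 - n * (pmOne d * d) : ℚ)]
    refine sum_congr rfl fun p hp ↦ ?_
    have hp₁ : 1 ≤ p.1 := Nat.pos_of_mem_divisors (Nat.fst_mem_divisors_of_mem_antidiagonal hp)
    rw [quadForm_self, nsmul_eq_mul, Nat.cast_sub hp₁, ← (Nat.mem_divisorsAntidiagonal.mp hp).1]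
    push_cast
    ring
  have hIco : ∑ p ∈ n.divisorsAntidiagonal, ∑ l ∈ Ico 1 p.1, quadForm p.1 l =
      ∑ d ∈ n.divisors, (pmOne d * d ^ 2 - (pmOne d * d / 5 + (d + 11 * d ^ 3) / 15) : ℚ) := by
    rw [Nat.sum_divisorsAntidiagonal fun d _ ↦ ∑ l ∈ Ico 1 d, quadForm d l]
    exact sum_congr rfl fun d hd ↦ sum_Ico_one_quadForm (Nat.pos_of_mem_divisors hd)
  rw [sum_sub_distrib, hself, hIco, cast_sigmaOn_pmOneMod5, ArithmeticFunction.sigma_one_apply,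
    ArithmeticFunction.sigma_apply]
  push_cast
  simp only [mul_sum, sum_div, ← sum_add_distrib, ← sum_sub_distrib]
  exact sum_congr rfl fun d _ ↦ by ring

theorem sigmaOn_pmOneMod5_convolution (n : ℕ) :
    15 * (n * sigmaOn pmOneMod5 n) +
        15 * ∑ p ∈ antidiagonal n, sigmaOn pmOneMod5 p.1 * sigmaOn pmOneMod5 p.2 +
        60 * ∑ p ∈ antidiagonal n, σ 1 p.1 * sigmaOn pmOneMod5 p.2 =
      3 * sigmaOn pmOneMod5 n + σ 1 n + 11 * σ 3 n := by
  have h := sum_posSolutions_sub_add_eq_sum_divisorsAntidiagonal quadForm_comm quadForm_add_self n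
  simp_rw [quadForm_sub_quadForm_add] at h
  rw [sum_posSolutions_pmOne, sum_divisorsAntidiagonal_quadForm] at h
  qify
  linear_combination 15 * h

section PowerSeries

variable {𝕜 : Type*}

theorem tsum_pnat_eq_tsum_of_zero {M : Type*} [AddCommMonoid M] [TopologicalSpace M] {f : ℕ → M}
    (hf : f 0 = 0) : ∑' n : ℕ+, f n = ∑' n, f n := by
  refine PNat.coe_injective.tsum_eq fun n hn ↦ ?_
  have hn₀ : n ≠ 0 := fun h ↦ hn (h ▸ hf)
  exact ⟨⟨n, Nat.pos_of_ne_zero hn₀⟩, rfl⟩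

theorem hasDerivAt_tsum_mul_pow [RCLike 𝕜] {c : ℕ → 𝕜} {k : ℕ}
    (hc : c =O[atTop] fun n ↦ ((n ^ k : ℕ) : 𝕜)) {q : 𝕜} (hq : ‖q‖ < 1) :
    HasDerivAt (fun z ↦ ∑' n, c n * z ^ n) (∑' n, c n * (n * q ^ (n - 1))) q := by
  obtain ⟨r, hqr, hr⟩ := exists_between hq
  have hr₀ : 0 < r := (norm_nonneg q).trans_lt hqr
  have hr' : ‖(r : 𝕜)‖ = r := RCLike.norm_of_nonneg hr₀.le
  have hnc : (fun n ↦ n * c n) =O[atTop] fun n ↦ ((n ^ (k + 1) : ℕ) : 𝕜) := by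
    simpa [pow_succ'] using (Asymptotics.isBigO_refl (fun n : ℕ ↦ (n : 𝕜)) atTop).mul hc
  have hu : Summable fun n ↦ ‖c n * (n * (r : 𝕜) ^ (n - 1))‖ := by
    refine ((summable_norm_mul_geometric_of_norm_lt_one' (r := (r : 𝕜)) (hr'.trans_lt hr)
      hnc).mul_right r⁻¹).congr fun n ↦ ?_
    rcases n with _ | n
    · simp
    · rw [Nat.add_sub_cancel, norm_mul, norm_mul, norm_mul, norm_mul, norm_pow, norm_pow, hr',
        pow_succ]
      field_simp
  have hball {z : 𝕜} (hz : ‖z‖ < r) : z ∈ Metric.ball 0 r := mem_ball_zero_iff.mpr hz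
  refine hasDerivAt_tsum_of_isPreconnected hu Metric.isOpen_ball
    (convex_ball 0 r).isPreconnected (fun n z _ ↦ (hasDerivAt_pow n z).const_mul (c n))
    (fun n z hz ↦ ?_) (hball hqr)
    (summable_norm_mul_geometric_of_norm_lt_one' hq hc).of_norm (hball hqr)
  rw [norm_mul, norm_mul, norm_mul, norm_mul, norm_pow, norm_pow, hr']
  gcongr
  exact (mem_ball_zero_iff.mp hz).le

theorem hasSum_sum_antidiagonal_mul_pow [NormedField 𝕜] [CompleteSpace 𝕜] {c e : ℕ → 𝕜} {q : 𝕜}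
    (hc : Summable fun n ↦ ‖c n * q ^ n‖) (he : Summable fun n ↦ ‖e n * q ^ n‖) :
    HasSum (fun n ↦ (∑ p ∈ antidiagonal n, c p.1 * e p.2) * q ^ n)
      ((∑' n, c n * q ^ n) * ∑' n, e n * q ^ n) := by
  have h (n : ℕ) : ∑ p ∈ antidiagonal n, c p.1 * q ^ p.1 * (e p.2 * q ^ p.2) =
      (∑ p ∈ antidiagonal n, c p.1 * e p.2) * q ^ n := by
    rw [sum_mul]
    refine sum_congr rfl fun p hp ↦ ?_
    rw [← HasAntidiagonal.mem_antidiagonal.mp hp, pow_add]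
    ring
  have hs := summable_norm_sum_mul_antidiagonal_of_summable_norm hc he
  rw [tsum_mul_tsum_eq_tsum_sum_antidiagonal_of_summable_norm hc he]
  simp_rw [h] at hs ⊢
  exact hs.of_norm.hasSum

theorem summable_prod_mul_pow_mul [NormedField 𝕜] [CompleteSpace 𝕜] {g : ℕ → 𝕜} {q : 𝕜}
    (hq : ‖q‖ < 1) (hg : Summable fun m ↦ ‖g m * q ^ m‖) :
    Summable fun c : ℕ+ × ℕ+ ↦ g c.1 * q ^ (c.1 * c.2 : ℕ) := by
  have hgeom : Summable fun k : ℕ+ ↦ ‖q‖ ^ k.natPred :=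
    (summable_geometric_of_lt_one (norm_nonneg q) hq).comp_injective PNat.natPred_injective
  refine Summable.of_norm_bounded ((hg.comp_injective PNat.coe_injective).mul_of_nonneg hgeom
    (fun _ ↦ norm_nonneg _) fun _ ↦ by positivity) fun ⟨m, k⟩ ↦ ?_
  calc ‖g m * q ^ (m * k : ℕ)‖ = ‖g m * q ^ (m : ℕ)‖ * ‖q‖ ^ (m * k.natPred) := by
        rw [← PNat.natPred_add_one k, norm_mul, norm_mul, norm_pow, norm_pow]
        ring
    _ ≤ ‖g m * q ^ (m : ℕ)‖ * ‖q‖ ^ k.natPred := by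
        gcongr ‖g m * q ^ (m : ℕ)‖ * ?_
        exact pow_le_pow_of_le_one (norm_nonneg q) hq.le (Nat.le_mul_of_pos_left _ m.pos)

theorem tsum_mul_pow_div_one_sub_pow_eq_tsum_sum_divisors [NormedField 𝕜] [CompleteSpace 𝕜]
    {g : ℕ → 𝕜} {q : 𝕜} (hq : ‖q‖ < 1) (hg : Summable fun m ↦ ‖g m * q ^ m‖) :
    ∑' m, g m * q ^ m / (1 - q ^ m) = ∑' n, (∑ d ∈ n.divisors, g d) * q ^ n := by
  have hgeom (m : ℕ+) : g m * q ^ (m : ℕ) / (1 - q ^ (m : ℕ)) =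
      ∑' k : ℕ+, g m * q ^ (m * k : ℕ) := by
    have hqm : ‖q ^ (m : ℕ)‖ < 1 := by
      rw [norm_pow]
      exact pow_lt_one₀ (norm_nonneg q) hq m.ne_zero
    rw [tsum_mul_left, tsum_pnat_eq_tsum_succ (f := fun k ↦ q ^ ((m : ℕ) * k)), div_eq_mul_inv,
      ← tsum_geometric_of_norm_lt_one hqm, mul_assoc, ← tsum_mul_left]
    exact congrArg _ (tsum_congr fun k ↦ by ring)
  have hdiv (n : ℕ+) : ∑' x : (n : ℕ).divisorsAntidiagonal, g x.1.1 * q ^ (x.1.1 * x.1.2) =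
      (∑ d ∈ (n : ℕ).divisors, g d) * q ^ (n : ℕ) := by
    rw [Finset.tsum_subtype (n : ℕ).divisorsAntidiagonal fun x ↦ g x.1 * q ^ (x.1 * x.2),
      ← Nat.sum_divisorsAntidiagonal fun d _ ↦ g d, sum_mul]
    exact sum_congr rfl fun x hx ↦ by rw [(Nat.mem_divisorsAntidiagonal.mp hx).1]
  have hsum := summable_prod_mul_pow_mul hq hg
  rw [← tsum_pnat_eq_tsum_of_zero (f := fun m ↦ g m * q ^ m / (1 - q ^ m)) (by simp),
    ← tsum_pnat_eq_tsum_of_zero (f := fun n ↦ (∑ d ∈ n.divisors, g d) * q ^ n) (by simp),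
    tsum_congr hgeom, ← hsum.tsum_prod, ← sigmaAntidiagonalEquivProd.tsum_eq, ← tsum_congr hdiv]
  exact (sigmaAntidiagonalEquivProd.summable_iff.mpr hsum).tsum_sigma

end PowerSeries

section SigmaSeries

variable {𝕜 : Type*}

theorem isBigO_natCast_of_le [RCLike 𝕜] {u v : ℕ → ℕ} (h : ∀ n, u n ≤ v n) (l : Filter ℕ) :
    (fun n ↦ (u n : 𝕜)) =O[l] fun n ↦ (v n : 𝕜) :=
  Asymptotics.IsBigO.of_bound 1 (.of_forall fun n ↦ by simpa using h n)

theorem sigmaOn_le_sq (S : Set ℕ) (n : ℕ) : sigmaOn S n ≤ n ^ 2 :=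
  calc sigmaOn S n ≤ ∑ d ∈ n.divisors, d := sum_le_sum fun d _ ↦ Set.indicator_le_self _ id d
    _ = σ 1 n := (ArithmeticFunction.sigma_one_apply n).symm
    _ ≤ n ^ 2 := ArithmeticFunction.sigma_le_pow_succ 1 n

theorem isBigO_sigmaOn [RCLike 𝕜] (S : Set ℕ) :
    (fun n ↦ (sigmaOn S n : 𝕜)) =O[atTop] fun n ↦ ((n ^ 2 : ℕ) : 𝕜) :=
  isBigO_natCast_of_le (sigmaOn_le_sq S) _

theorem tsum_subtype_mul_pow_div_one_sub_pow_eq_tsum_sigmaOn [RCLike 𝕜] (S : Set ℕ) {q : 𝕜}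
    (hq : ‖q‖ < 1) :
    ∑' m : S, (m : 𝕜) * q ^ (m : ℕ) / (1 - q ^ (m : ℕ)) = ∑' n, sigmaOn S n * q ^ n := by
  have hS : Summable fun m ↦ ‖((S.indicator id m : ℕ) : 𝕜) * q ^ m‖ :=
    summable_norm_mul_geometric_of_norm_lt_one' (k := 1) hq <|
      isBigO_natCast_of_le (fun m ↦ by simpa using Set.indicator_le_self S id m) _
  rw [tsum_subtype S fun m ↦ (m : 𝕜) * q ^ m / (1 - q ^ m)]
  simp only [sigmaOn, Nat.cast_sum, ← tsum_mul_pow_div_one_sub_pow_eq_tsum_sum_divisors hq hS]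
  refine tsum_congr fun m ↦ ?_
  by_cases hm : m ∈ S <;> simp [hm]

theorem tsum_sum_divisors_succ_eq_tsum_sigma [NormedField 𝕜] (k : ℕ) (q : 𝕜) :
    ∑' n : ℕ, (∑ d ∈ (n + 1).divisors, (d : 𝕜) ^ k) * q ^ (n + 1) = ∑' n, (σ k n : 𝕜) * q ^ n := by
  rw [← tsum_pnat_eq_tsum_of_zero (f := fun n ↦ (σ k n : 𝕜) * q ^ n) (by simp),
    tsum_pnat_eq_tsum_succ (f := fun n ↦ (σ k n : 𝕜) * q ^ n)]
  simp [ArithmeticFunction.sigma_apply]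

end SigmaSeries

section EulerProduct

/-- The product of `1 - q ^ m` over `m ∈ S`, that is, the reciprocal of the generating function of
the partitions with all parts in `S`. -/
noncomputable def eulerProd (S : Set ℕ) (q : ℂ) : ℂ := ∏' m : S, (1 - q ^ (m : ℕ))

theorem one_sub_pow_ne_zero {𝕜 : Type*} [NormedField 𝕜] {q : 𝕜} (hq : ‖q‖ < 1) {m : ℕ}
    (hm : m ≠ 0) : 1 - q ^ m ≠ 0 := by
  refine sub_ne_zero.mpr fun h ↦ ?_
  have := pow_lt_one₀ (norm_nonneg q) hq hm
  rw [← norm_pow, ← h, norm_one] at this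
  exact this.false

variable {S : Set ℕ} {q : ℂ}

theorem multipliableLocallyUniformlyOn_subtype_one_sub_pow (S : Set ℕ) :
    MultipliableLocallyUniformlyOn (fun (m : S) (z : ℂ) ↦ 1 - z ^ (m : ℕ)) (Metric.ball 0 1) := by
  refine ⟨eulerProd S, ?_⟩
  simp_rw [funext fun z ↦ eulerProd.eq_1 S z, sub_eq_add_neg]
  refine hasProdLocallyUniformlyOn_of_forall_compact Metric.isOpen_ball fun K hK hcK ↦ ?_
  obtain ⟨r, ⟨hr₀, hr⟩, hKr⟩ := exists_pos_lt_subset_ball one_pos hcK.isClosed hK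
  refine Summable.hasProdUniformlyOn_one_add hcK
    ((summable_geometric_of_lt_one hr₀.le hr).subtype S) (.of_forall fun m z hz ↦ ?_)
    fun m ↦ by fun_prop
  rw [norm_neg, norm_pow]
  exact pow_le_pow_left₀ (norm_nonneg z) (mem_ball_zero_iff.mp (hKr hz)).le _

theorem multipliable_subtype_one_sub_pow (S : Set ℕ) (hq : ‖q‖ < 1) :
    Multipliable fun m : S ↦ 1 - q ^ (m : ℕ) :=
  (multipliableLocallyUniformlyOn_subtype_one_sub_pow S).multipliable (mem_ball_zero_iff.mpr hq)

theorem differentiableAt_eulerProd (S : Set ℕ) (hq : ‖q‖ < 1) :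
    DifferentiableAt ℂ (eulerProd S) q := by
  refine DifferentiableOn.differentiableAt ?_
    (Metric.isOpen_ball.mem_nhds (mem_ball_zero_iff.mpr hq))
  have h := (multipliableLocallyUniformlyOn_subtype_one_sub_pow S).hasProdLocallyUniformlyOn
  exact h.differentiableOn
    (.of_forall fun _ ↦ by
      simpa [Finset.prod_fn] using DifferentiableOn.finsetProd fun _ _ ↦ by fun_prop)
    Metric.isOpen_ball

theorem eulerProd_ne_zero (hS : 0 ∉ S) (hq : ‖q‖ < 1) : eulerProd S q ≠ 0 := by
  simp_rw [eulerProd, sub_eq_add_neg]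
  refine tprod_one_add_ne_zero_of_summable (fun m ↦ ?_) ?_
  · rw [← sub_eq_add_neg]
    exact one_sub_pow_ne_zero hq fun hm ↦ hS (hm ▸ m.2)
  · simpa using! (summable_geometric_of_lt_one (norm_nonneg q) hq).subtype S

theorem eulerProd_union {T : Set ℕ} (hST : Disjoint S T) (hq : ‖q‖ < 1) :
    eulerProd (S ∪ T) q = eulerProd S q * eulerProd T q :=
  Multipliable.tprod_union_disjoint (f := fun m ↦ 1 - q ^ m) hST
    (multipliable_subtype_one_sub_pow S hq) (multipliable_subtype_one_sub_pow T hq)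

theorem hasProd_eulerProd_range {f : ℕ → ℕ} (hf : f.Injective) (hq : ‖q‖ < 1) :
    HasProd (fun n ↦ 1 - q ^ f n) (eulerProd (Set.range f) q) :=
  (Equiv.ofInjective f hf).hasProd_iff.mpr
    (multipliable_subtype_one_sub_pow (Set.range f) hq).hasProd

theorem mul_logDeriv_one_sub_pow {𝕜 : Type*} [NontriviallyNormedField 𝕜] (m : ℕ) (q : 𝕜) :
    q * logDeriv (fun z ↦ 1 - z ^ m) q = -(m * q ^ m / (1 - q ^ m)) := by
  rw [logDeriv_apply, deriv_const_sub, deriv_pow_field]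
  rcases m with _ | m
  · simp
  · rw [Nat.add_sub_cancel, pow_succ]
    ring

theorem mul_logDeriv_eulerProd (hS : 0 ∉ S) (hq : ‖q‖ < 1) :
    q * logDeriv (eulerProd S) q = -∑' n, sigmaOn S n * q ^ n := by
  rcases eq_or_ne q 0 with rfl | hq₀
  · have h (n : ℕ) : (sigmaOn S n : ℂ) * 0 ^ n = 0 := by rcases n with _ | n <;> simp [sigmaOn]
    simp [h]
  have hsum : Summable fun m : S ↦ q * logDeriv (fun z ↦ 1 - z ^ (m : ℕ)) q := by
    simp_rw [mul_logDeriv_one_sub_pow]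
    simpa using! ((summable_norm_pow_mul_geometric_div_one_sub 1 hq).subtype S).neg
  have hlog : logDeriv (eulerProd S) q = ∑' m : S, logDeriv (fun z ↦ 1 - z ^ (m : ℕ)) q :=
    logDeriv_tprod_eq_tsum Metric.isOpen_ball (mem_ball_zero_iff.mpr hq)
      (fun m ↦ one_sub_pow_ne_zero hq fun hm ↦ hS (hm ▸ m.2)) (fun m ↦ by fun_prop)
      ((summable_mul_left_iff hq₀).mp hsum)
      (multipliableLocallyUniformlyOn_subtype_one_sub_pow S) (eulerProd_ne_zero hS hq)
  rw [hlog, ← tsum_mul_left]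
  simp_rw [mul_logDeriv_one_sub_pow]
  rw [tsum_neg, tsum_subtype_mul_pow_div_one_sub_pow_eq_tsum_sigmaOn S hq]

theorem zero_notMem_pmOneMod5 : 0 ∉ pmOneMod5 := by
  simp +decide [pmOneMod5]

theorem pmOneMod5_eq_range_union_range :
    pmOneMod5 = Set.range (fun n ↦ 5 * n + 1) ∪ Set.range fun n ↦ 5 * n + 4 := by
  ext m
  simp only [pmOneMod5, Set.mem_ofPred_eq, Set.mem_union, Set.mem_range]
  constructor
  · rw [← Nat.div_add_mod m 5, natCast_five_mul_add_zmod_five]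
    have : m % 5 < 5 := Nat.mod_lt _ (by norm_num)
    interval_cases m % 5 <;> simp +decide
  · rintro (⟨n, rfl⟩ | ⟨n, rfl⟩) <;> rw [natCast_five_mul_add_zmod_five] <;> decide

theorem inv_eulerProd_pmOneMod5 (hq : ‖q‖ < 1) :
    (eulerProd pmOneMod5 q)⁻¹ =
      ∏' n : ℕ, ((1 - q ^ (5 * n + 1)) * (1 - q ^ (5 * n + 4)))⁻¹ := by
  have hinj (r : ℕ) : Function.Injective fun n ↦ 5 * n + r := fun m n h ↦ by simpa using h
  have hdisj : Disjoint (Set.range fun n ↦ 5 * n + 1) (Set.range fun n ↦ 5 * n + 4) := by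
    rw [Set.disjoint_left]
    rintro _ ⟨m, rfl⟩ ⟨n, hn⟩
    grind
  have hprod : HasProd (fun n : ℕ ↦ (1 - q ^ (5 * n + 1)) * (1 - q ^ (5 * n + 4)))
      (eulerProd pmOneMod5 q) := by
    rw [pmOneMod5_eq_range_union_range, eulerProd_union hdisj hq]
    exact (hasProd_eulerProd_range (hinj 1) hq).mul (hasProd_eulerProd_range (hinj 4) hq)
  exact (hprod.inv₀ (eulerProd_ne_zero zero_notMem_pmOneMod5 hq)).tprod_eq.symm

end EulerProduct

section EulerDerivative

variable {𝕜 : Type*}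

/-- The Euler derivative `q * F'(q)` of `F`. -/
noncomputable def eulerDeriv [NontriviallyNormedField 𝕜] (F : 𝕜 → 𝕜) : 𝕜 → 𝕜 :=
  fun q ↦ q * deriv F q

theorem eulerDeriv_congr [NontriviallyNormedField 𝕜] {F G : 𝕜 → 𝕜} {q : 𝕜} (h : F =ᶠ[𝓝 q] G) :
    eulerDeriv F =ᶠ[𝓝 q] eulerDeriv G :=
  h.deriv.mono fun z hz ↦ congrArg (z * ·) hz

theorem eulerDeriv_eulerDeriv_of_eventuallyEq_mul [NontriviallyNormedField 𝕜]
    {A F : 𝕜 → 𝕜} {q : 𝕜} (hA : DifferentiableAt 𝕜 A q) (hF : DifferentiableAt 𝕜 F q)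
    (h : eulerDeriv F =ᶠ[𝓝 q] fun z ↦ A z * F z) :
    eulerDeriv (eulerDeriv F) q = (eulerDeriv A q + A q ^ 2) * F q := by
  have hq : q * deriv F q = A q * F q := h.eq_of_nhds
  rw [eulerDeriv, h.deriv_eq, deriv_fun_mul hA hF, eulerDeriv]
  linear_combination A q * hq

theorem eulerDeriv_tsum_mul_pow [RCLike 𝕜] {c : ℕ → 𝕜} {k : ℕ}
    (hc : c =O[atTop] fun n ↦ ((n ^ k : ℕ) : 𝕜)) {q : 𝕜} (hq : ‖q‖ < 1) :
    eulerDeriv (fun z ↦ ∑' n, c n * z ^ n) q = ∑' n, n * c n * q ^ n := by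
  rw [eulerDeriv, (hasDerivAt_tsum_mul_pow hc hq).deriv, ← tsum_mul_left]
  refine tsum_congr fun n ↦ ?_
  rcases n with _ | n
  · simp
  · rw [Nat.add_sub_cancel, pow_succ]
    ring

theorem eulerDeriv_inv_eulerProd {S : Set ℕ} (hS : 0 ∉ S) {q : ℂ} (hq : ‖q‖ < 1) :
    eulerDeriv (fun z ↦ (eulerProd S z)⁻¹) q =
      (∑' n, sigmaOn S n * q ^ n) * (eulerProd S q)⁻¹ := by
  have hne := eulerProd_ne_zero hS hq
  have hlog := mul_logDeriv_eulerProd hS hq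
  rw [logDeriv_apply] at hlog
  rw [eulerDeriv, deriv_fun_inv'' (differentiableAt_eulerProd S hq) hne,
    ← neg_eq_iff_eq_neg.mpr hlog]
  field_simp

theorem eulerDeriv_eulerDeriv_inv_eulerProd {S : Set ℕ} (hS : 0 ∉ S) {q : ℂ} (hq : ‖q‖ < 1) :
    eulerDeriv (eulerDeriv fun z ↦ (eulerProd S z)⁻¹) q =
      (eulerDeriv (fun z : ℂ ↦ ∑' n, sigmaOn S n * z ^ n) q + (∑' n, sigmaOn S n * q ^ n) ^ 2) *
        (eulerProd S q)⁻¹ := by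
  refine eulerDeriv_eulerDeriv_of_eventuallyEq_mul
    (hasDerivAt_tsum_mul_pow (isBigO_sigmaOn S) hq).differentiableAt
    ((differentiableAt_eulerProd S hq).inv (eulerProd_ne_zero hS hq)) ?_
  filter_upwards [Metric.isOpen_ball.mem_nhds (mem_ball_zero_iff.mpr hq)] with z hz
  exact eulerDeriv_inv_eulerProd hS (mem_ball_zero_iff.mp hz)

theorem tsum_sigmaOn_pmOneMod5_riccati [RCLike 𝕜] {q : 𝕜} (hq : ‖q‖ < 1) :
    15 * eulerDeriv (fun z : 𝕜 ↦ ∑' n, sigmaOn pmOneMod5 n * z ^ n) q +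
        15 * (∑' n, sigmaOn pmOneMod5 n * q ^ n) ^ 2 +
        60 * (∑' n, σ 1 n * q ^ n) * (∑' n, sigmaOn pmOneMod5 n * q ^ n) =
      3 * (∑' n, sigmaOn pmOneMod5 n * q ^ n) + ∑' n, σ 1 n * q ^ n +
        11 * ∑' n, σ 3 n * q ^ n := by
  have summable_of_le {u : ℕ → ℕ} {k : ℕ} (h : ∀ n, u n ≤ n ^ k) :
      Summable fun n ↦ ‖(u n : 𝕜) * q ^ n‖ :=
    summable_norm_mul_geometric_of_norm_lt_one' hq (isBigO_natCast_of_le h _)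
  have hA := summable_of_le (sigmaOn_le_sq pmOneMod5)
  have hσ (k : ℕ) := summable_of_le (ArithmeticFunction.sigma_le_pow_succ k)
  have hDA := summable_of_le (u := fun n ↦ n * sigmaOn pmOneMod5 n) (k := 3) fun n ↦ by
    rw [pow_succ']
    exact Nat.mul_le_mul_left n (sigmaOn_le_sq pmOneMod5 n)
  have left := ((hDA.of_norm.hasSum.mul_left 15).add
    ((hasSum_sum_antidiagonal_mul_pow hA hA).mul_left 15)).add
    ((hasSum_sum_antidiagonal_mul_pow (hσ 1) hA).mul_left 60)
  have right := ((hA.of_norm.hasSum.mul_left 3).add (hσ 1).of_norm.hasSum).add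
    ((hσ 3).of_norm.hasSum.mul_left 11)
  rw [eulerDeriv_tsum_mul_pow (isBigO_sigmaOn pmOneMod5) hq, sq, mul_assoc 60]
  convert left.unique (right.congr_fun fun n ↦ ?_) using 4
  · simp only [Nat.cast_mul]
  · have h : (_ : 𝕜) = _ := congrArg Nat.cast (sigmaOn_pmOneMod5_convolution n)
    push_cast at h ⊢
    linear_combination q ^ n * h

end EulerDerivative

/-- The Rogers–Ramanujan product `L₂(q) = ∏_{n≥0} 1/((1-q^{5n+1})(1-q^{5n+4}))`
satisfies `(qd/dq)²F + (-1/5 + 4∑σ₁(n)qⁿ)(qd/dq)F - (1/15)(∑σ₁(n)qⁿ + 11∑σ₃(n)qⁿ)·F = 0`. -/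
theorem RR_product_L2_ODE (L₂ : ℂ → ℂ)
    (hL : L₂ = fun q : ℂ => ∏' n : ℕ, ((1 - q ^ (5 * n + 1)) * (1 - q ^ (5 * n + 4)))⁻¹)
    (D : (ℂ → ℂ) → (ℂ → ℂ)) (hD : D = fun F => fun q => q * deriv F q)
    (q : ℂ) (hq : ‖q‖ < 1) :
    D (D L₂) q
      + (-(1 / 5) + 4 * ∑' n : ℕ, (∑ d ∈ (n + 1).divisors, (d : ℂ)) * q ^ (n + 1)) * D L₂ q
      - 1 / 15 * ((∑' n : ℕ, (∑ d ∈ (n + 1).divisors, (d : ℂ)) * q ^ (n + 1))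
          + 11 * ∑' n : ℕ, (∑ d ∈ (n + 1).divisors, (d : ℂ) ^ 3) * q ^ (n + 1)) * L₂ q = 0 := by
  obtain rfl : D = eulerDeriv := hD
  have hLP : L₂ =ᶠ[𝓝 q] fun z ↦ (eulerProd pmOneMod5 z)⁻¹ := by
    filter_upwards [Metric.isOpen_ball.mem_nhds (mem_ball_zero_iff.mpr hq)] with z hz
    rw [hL, inv_eulerProd_pmOneMod5 (mem_ball_zero_iff.mp hz)]
  have hDLP := eulerDeriv_congr hLP
  have hσ₁ : ∑' n : ℕ, (∑ d ∈ (n + 1).divisors, (d : ℂ)) * q ^ (n + 1) = ∑' n, σ 1 n * q ^ n := by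
    simpa using tsum_sum_divisors_succ_eq_tsum_sigma 1 q
  rw [(eulerDeriv_congr hDLP).eq_of_nhds, hDLP.eq_of_nhds, hLP.eq_of_nhds,
    eulerDeriv_eulerDeriv_inv_eulerProd zero_notMem_pmOneMod5 hq,
    eulerDeriv_inv_eulerProd zero_notMem_pmOneMod5 hq, hσ₁, tsum_sum_divisors_succ_eq_tsum_sigma]
  linear_combination (eulerProd pmOneMod5 q)⁻¹ / 15 * tsum_sigmaOn_pmOneMod5_riccati hq
end

section
/- Let a(n) denote the number of partitions of n into parts congruent to ±2 mod 5. Then for every n ≥ 1, (15n² + 3n)·a(n) = 11·∑_{k=0}^{n-1} (σ₃(n-k) - σ₁(n-k))·a(k) - 60·∑_{k=0}^{n-1} k·a(k)·σ₁(n-k). -/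
open scoped BigOperators

/-- `a n` = number of partitions of `n` into parts `≡ ±2 (mod 5)`. -/
noncomputable def mod5PartCount (n : ℕ) : ℕ :=
  Nat.card {p : n.Partition // ∀ x ∈ p.parts, x % 5 = 2 ∨ x % 5 = 3}

/-!
Let `F = ∑ a(n) qⁿ` and `θ = q d/dq`. Differentiating the product for `F` logarithmically gives
`θF = L F` with `L = ∑ₙ (∑_{d ∣ n, d ≡ ±2 mod 5} d) qⁿ`, so `θ²F = (θL + L²) F`, and the recursion
is the coefficient form of the Riccati equation `15 θL + 15 L² + 3 L = 11 (Q - P) - 60 P L`, where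
`P = ∑ σ₁(n) qⁿ` and `Q = ∑ σ₃(n) qⁿ`.

The quadratic terms `L²` and `P L` are sums over solutions of `ax + by = n`. Liouville's
substitution `(a, x, b, y) ↦ (a, x + y, b - a, y)` evaluates
`∑ (f(a, b) - f(a, a + b))` as a divisor sum when `f(a, b)` and `f(a, a + b)` are both symmetric.
Take `f(a, b) = H(a, -b)`, where `H(u, v)` is a quadratic form in `u`, `v`, `-(u + v)` with
coefficients depending on residues mod 5 and invariant under the symmetries of the hexagonal
lattice; then `f(a, a + b) = H(a, b)`, and the coefficients are chosen so that
`H(a, -b) - H(a, b)` is the general term of `L² + 4 P L`, up to a factor.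
-/

section

open Finset PowerSeries

section EulerDerivation

variable (R : Type*)

/-- The derivation `X · d/dX` of the power series ring, which multiplies the `n`-th coefficient by
`n`; it turns infinite products into logarithmic derivatives with no shift of exponents. -/
noncomputable def eulerDerivation [CommSemiring R] : Derivation R R⟦X⟧ R⟦X⟧ :=
  (X : R⟦X⟧) • derivative R

variable {R}

theorem coeff_eulerDerivation [CommSemiring R] (f : R⟦X⟧) (n : ℕ) :
    coeff n (eulerDerivation R f) = n * coeff n f := by
  change coeff n (X * derivative R f) = _
  cases n with
  | zero => simp
  | succ n => simp [coeff_succ_X_mul, coeff_derivative, mul_comm]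

theorem derivation_prod_eq_sum_mul_prod {A ι : Type*} [CommSemiring R] [CommSemiring A]
    [Algebra R A] (D : Derivation R A A) {f l : ι → A} (h : ∀ i, D (f i) = l i * f i)
    (s : Finset ι) : D (∏ i ∈ s, f i) = (∑ i ∈ s, l i) * ∏ i ∈ s, f i := by
  classical
  induction s using Finset.induction_on with
  | empty => simp
  | insert i s hi ih =>
    rw [prod_insert hi, sum_insert hi, D.leibniz, ih, h, smul_eq_mul, smul_eq_mul]
    ring

open scoped PowerSeries.WithPiTopology in
theorem eulerDerivation_eq_mul_of_hasProd {ι : Type*} [CommSemiring R] [TopologicalSpace R]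
    [IsTopologicalSemiring R] [T2Space R] {f l : ι → R⟦X⟧} {F L : R⟦X⟧} (hf : HasProd f F)
    (hl : HasSum l L) (h : ∀ i, eulerDerivation R (f i) = l i * f i) :
    eulerDerivation R F = L * F := by
  have hD : Continuous (eulerDerivation R) := continuous_iff_continuousAt.2 fun g ↦
    (WithPiTopology.tendsto_iff_coeff_tendsto ..).2 fun n ↦ by
      simp only [coeff_eulerDerivation]
      exact ((WithPiTopology.continuous_coeff R n).const_mul (n : R)).tendsto g
  have hF : Filter.Tendsto (fun s : Finset ι ↦ (∑ i ∈ s, l i) * ∏ i ∈ s, f i) .atTop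
      (nhds (eulerDerivation R F)) := by
    simp only [← derivation_prod_eq_sum_mul_prod _ h]
    exact (hD.tendsto F).comp hf
  exact tendsto_nhds_unique hF (Filter.Tendsto.mul hl hf)

/-- The Lambert series `∑ d ≥ 1, f d * X ^ d / (1 - X ^ d)`, encoded by its coefficients, the
divisor sums of `f`. The value `f 0` plays no part, and the constant coefficient is `0` because
`Nat.divisors 0 = ∅`. -/
noncomputable def lambertSeries [Semiring R] (f : ℕ → R) : R⟦X⟧ :=
  mk fun n ↦ ∑ d ∈ n.divisors, f d

theorem coeff_lambertSeries_mul [Semiring R] (f : ℕ → R) (g : R⟦X⟧) (n : ℕ) :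
    coeff n (lambertSeries f * g) =
      ∑ k ∈ range n, (∑ d ∈ (n - k).divisors, f d) * coeff k g := by
  rw [coeff_mul, ← Nat.sum_antidiagonal_swap, Nat.sum_antidiagonal_eq_sum_range_succ_mk,
    sum_range_succ]
  simp [lambertSeries]

open scoped PowerSeries.WithPiTopology in
theorem tsum_X_pow_mul [Semiring R] [TopologicalSpace R] [T2Space R] {m : ℕ} (hm : m ≠ 0) :
    ∑' j : ℕ, (X : R⟦X⟧) ^ (m * j) = mk fun n ↦ if m ∣ n then 1 else 0 := by
  refine HasSum.tsum_eq ((WithPiTopology.hasSum_iff_hasSum_coeff R).2 fun n ↦ ?_)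
  simp only [coeff_X_pow, coeff_mk]
  split_ifs with h
  · obtain ⟨c, rfl⟩ := h
    simpa [hm, eq_comm] using hasSum_ite_eq c (1 : R)
  · have h' (j : ℕ) : n ≠ m * j := fun hj ↦ h ⟨j, hj⟩
    simpa only [h', if_false] using hasSum_zero

open scoped PowerSeries.WithPiTopology in
theorem hasSum_lambertSeries [Ring R] [TopologicalSpace R] [T2Space R] (f : ℕ → R) :
    HasSum (fun i ↦ C (f (i + 1)) * (∑' j : ℕ, X ^ ((i + 1) * j) - 1)) (lambertSeries f) := by
  refine (WithPiTopology.hasSum_iff_hasSum_coeff R).2 fun n ↦ ?_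
  have hcoeff (i : ℕ) : coeff n (C (f (i + 1)) * (∑' j : ℕ, X ^ ((i + 1) * j) - 1)) =
      if i + 1 ∈ n.divisors then f (i + 1) else 0 := by
    rw [tsum_X_pow_mul i.succ_ne_zero]
    obtain rfl | hn := eq_or_ne n 0 <;> simp [coeff_one, *]
  have hsum : coeff n (lambertSeries f) =
      ∑ i ∈ range n, if i + 1 ∈ n.divisors then f (i + 1) else 0 := by
    have hIco : n.divisors ⊆ Ico 1 (n + 1) := filter_subset ..
    rw [range_eq_Ico, sum_Ico_add' (fun d ↦ if d ∈ n.divisors then f d else 0), sum_ite_mem,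
      zero_add, inter_eq_right.2 hIco, lambertSeries, coeff_mk]
  simp only [hcoeff, hsum]
  exact hasSum_sum_of_ne_finset_zero fun i hi ↦ if_neg fun h ↦
    hi (mem_range.2 (Nat.divisor_le h))

open scoped PowerSeries.WithPiTopology in
theorem eulerDerivation_tsum_X_pow_mul [CommRing R] [TopologicalSpace R] [IsTopologicalRing R]
    [T2Space R] {m : ℕ} (hm : m ≠ 0) :
    eulerDerivation R (∑' j : ℕ, X ^ (m * j)) =
      C (m : R) * (∑' j : ℕ, X ^ (m * j) - 1) * ∑' j : ℕ, X ^ (m * j) := by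
  have h : (1 - X ^ m) * ∑' j : ℕ, (X : R⟦X⟧) ^ (m * j) = 1 := by
    simp_rw [pow_mul]
    exact WithPiTopology.one_sub_mul_tsum_pow_of_constantCoeff_eq_zero (by simp [hm])
  generalize ∑' j : ℕ, (X : R⟦X⟧) ^ (m * j) = g at h ⊢
  have hX : eulerDerivation R (X ^ m) = C (m : R) * X ^ m := by
    ext n
    rw [coeff_eulerDerivation, coeff_C_mul, coeff_X_pow]
    split_ifs with hn <;> simp [hn]
  have hD := congrArg (eulerDerivation R) h
  simp only [Derivation.leibniz, map_sub, hX, Derivation.map_one_eq_zero, smul_eq_mul] at hD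
  linear_combination g * hD - (C (m : R) * g + eulerDerivation R g) * h

variable (R) in
theorem eulerDerivation_mk_card_restricted [CommRing R] (P : ℕ → Prop) [DecidablePred P] :
    eulerDerivation R (mk fun n ↦ (#(Nat.Partition.restricted n P) : R)) =
      lambertSeries (fun d ↦ if P d then (d : R) else 0) *
        mk fun n ↦ (#(Nat.Partition.restricted n P) : R) := by
  let _ : TopologicalSpace R := ⊥
  have : DiscreteTopology R := ⟨rfl⟩
  refine eulerDerivation_eq_mul_of_hasProd
    (Nat.Partition.hasProd_powerSeriesMk_card_restricted R P) (hasSum_lambertSeries _) fun i ↦ ?_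
  split_ifs
  · exact eulerDerivation_tsum_X_pow_mul i.succ_ne_zero
  · simp

end EulerDerivation

section Liouville

/-- The pairs `((a, x), (b, y))` of pairs of positive integers with `a * x + b * y = n`, the index
set of the `n`-th coefficient of a product of two Lambert series. -/
def liouvilleQuadruples (n : ℕ) : Finset ((ℕ × ℕ) × ℕ × ℕ) :=
  {t ∈ (Icc 1 n ×ˢ Icc 1 n) ×ˢ (Icc 1 n ×ˢ Icc 1 n) | t.1.1 * t.1.2 + t.2.1 * t.2.2 = n}

theorem mem_liouvilleQuadruples {n : ℕ} {t : (ℕ × ℕ) × ℕ × ℕ} : t ∈ liouvilleQuadruples n ↔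
    ((0 < t.1.1 ∧ 0 < t.1.2) ∧ 0 < t.2.1 ∧ 0 < t.2.2) ∧ t.1.1 * t.1.2 + t.2.1 * t.2.2 = n := by
  obtain ⟨⟨a, x⟩, b, y⟩ := t
  simp only [liouvilleQuadruples, mem_filter, mem_product, mem_Icc]
  refine and_congr_left ?_
  rintro rfl
  constructor
  · grind
  · rintro ⟨⟨ha, hx⟩, hb, hy⟩
    refine ⟨⟨⟨ha, ?_⟩, hx, ?_⟩, ⟨hb, ?_⟩, hy, ?_⟩ <;> nlinarith

theorem coeff_lambertSeries_mul_lambertSeries {R : Type*} [Semiring R] (f g : ℕ → R) (n : ℕ) :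
    coeff n (lambertSeries f * lambertSeries g) =
      ∑ t ∈ liouvilleQuadruples n, f t.1.1 * g t.2.1 := by
  have hmaps : ∀ t ∈ liouvilleQuadruples n,
      (t.1.1 * t.1.2, t.2.1 * t.2.2) ∈ antidiagonal n := fun t ht ↦
    mem_antidiagonal.2 (mem_liouvilleQuadruples.1 ht).2
  rw [coeff_mul, ← sum_fiberwise_of_maps_to hmaps]
  refine sum_congr rfl fun p hp ↦ ?_
  have hfiber : {t ∈ liouvilleQuadruples n | (t.1.1 * t.1.2, t.2.1 * t.2.2) = p} =
      p.1.divisorsAntidiagonal ×ˢ p.2.divisorsAntidiagonal := by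
    ext t
    simp only [mem_filter, mem_liouvilleQuadruples, mem_product, Nat.mem_divisorsAntidiagonal,
      Prod.ext_iff, ← mem_antidiagonal.1 hp]
    constructor
    · rintro ⟨⟨⟨⟨ha, hx⟩, hb, hy⟩, -⟩, hax, hby⟩
      exact ⟨⟨hax, hax ▸ (Nat.mul_pos ha hx).ne'⟩, hby, hby ▸ (Nat.mul_pos hb hy).ne'⟩
    · rintro ⟨⟨hax, h₁⟩, hby, h₂⟩
      rw [← hax, Nat.mul_ne_zero_iff, ← Nat.pos_iff_ne_zero, ← Nat.pos_iff_ne_zero] at h₁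
      rw [← hby, Nat.mul_ne_zero_iff, ← Nat.pos_iff_ne_zero, ← Nat.pos_iff_ne_zero] at h₂
      exact ⟨⟨⟨h₁, h₂⟩, congrArg₂ _ hax hby⟩, hax, hby⟩
  rw [hfiber, sum_product, lambertSeries, lambertSeries, coeff_mk, coeff_mk,
    ← Nat.sum_divisorsAntidiagonal (fun a _ ↦ f a),
    ← Nat.sum_divisorsAntidiagonal (fun b _ ↦ g b), sum_mul_sum]

section AddCommMonoid
variable {M : Type*} [AddCommMonoid M]

theorem sum_liouvilleQuadruples_lt_comm (g : ℕ → ℕ → M) (n : ℕ) (r : ℕ × ℕ → ℕ) :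
    ∑ t ∈ liouvilleQuadruples n with r t.2 < r t.1, g t.1.1 t.2.1 =
      ∑ t ∈ liouvilleQuadruples n with r t.1 < r t.2, g t.2.1 t.1.1 := by
  refine sum_nbij' Prod.swap Prod.swap ?_ ?_ (fun _ _ ↦ rfl) (fun _ _ ↦ rfl) (fun _ _ ↦ rfl) <;>
  simp only [mem_filter, mem_liouvilleQuadruples, Prod.fst_swap, Prod.snd_swap] <;>
  grind

theorem sum_liouvilleQuadruples_eq_two_nsmul_add {g : ℕ → ℕ → M}
    (hg : ∀ a b, g a b = g b a) (n : ℕ) (r : ℕ × ℕ → ℕ) :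
    ∑ t ∈ liouvilleQuadruples n, g t.1.1 t.2.1 =
      2 • ∑ t ∈ liouvilleQuadruples n with r t.1 < r t.2, g t.1.1 t.2.1 +
        ∑ t ∈ liouvilleQuadruples n with r t.1 = r t.2, g t.1.1 t.2.1 := by
  have h := sum_liouvilleQuadruples_lt_comm g n r
  simp only [fun t : (ℕ × ℕ) × ℕ × ℕ ↦ hg t.2.1 t.1.1] at h
  rw [two_nsmul]
  nth_rewrite 2 [← h]
  simp only [sum_filter, ← sum_add_distrib]
  refine sum_congr rfl fun t _ ↦ ?_
  rcases lt_trichotomy (r t.1) (r t.2) with h | h | h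
  · simp [h, h.not_gt, h.ne]
  · simp [h]
  · simp [h, h.not_gt, h.ne']

theorem sum_liouvilleQuadruples_shear (f : ℕ → ℕ → M) (n : ℕ) :
    ∑ t ∈ liouvilleQuadruples n with t.1.1 < t.2.1, f t.1.1 t.2.1 =
      ∑ t ∈ liouvilleQuadruples n with t.2.2 < t.1.2, f t.1.1 (t.1.1 + t.2.1) := by
  refine sum_nbij' (fun t ↦ ((t.1.1, t.1.2 + t.2.2), (t.2.1 - t.1.1, t.2.2)))
    (fun t ↦ ((t.1.1, t.1.2 - t.2.2), (t.1.1 + t.2.1, t.2.2))) ?_ ?_ ?_ ?_ ?_ <;>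
  rintro ⟨⟨a, x⟩, b, y⟩ h <;>
  simp only [mem_filter, mem_liouvilleQuadruples] at h ⊢
  · obtain ⟨⟨h₀, rfl⟩, hlt⟩ := h
    obtain ⟨c, rfl⟩ := Nat.exists_eq_add_of_lt hlt
    refine ⟨⟨by omega, ?_⟩, by omega⟩
    rw [add_assoc, Nat.add_sub_cancel_left]
    ring
  · obtain ⟨⟨h₀, rfl⟩, hlt⟩ := h
    obtain ⟨c, rfl⟩ := Nat.exists_eq_add_of_lt hlt
    refine ⟨⟨by omega, ?_⟩, by omega⟩
    rw [add_assoc, Nat.add_sub_cancel_left]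
    ring
  · grind
  · grind
  · rw [Nat.add_sub_cancel' h.2.le]

theorem sum_liouvilleQuadruples_fst_eq (f : ℕ → ℕ → M) (n : ℕ) :
    ∑ t ∈ liouvilleQuadruples n with t.1.1 = t.2.1, f t.1.1 t.2.1 =
      ∑ p ∈ n.divisorsAntidiagonal, (p.2 - 1) • f p.1 p.1 := by
  simp_rw [← Nat.card_Ico, ← sum_const]
  rw [sum_sigma']
  refine sum_nbij' (fun t ↦ ⟨(t.1.1, t.1.2 + t.2.2), t.1.2⟩)
    (fun s ↦ ((s.1.1, s.2), (s.1.1, s.1.2 - s.2))) ?_ ?_ ?_ ?_ ?_ <;>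
  simp only [mem_filter, mem_liouvilleQuadruples, mem_sigma, Nat.mem_divisorsAntidiagonal, mem_Ico]
  · rintro ⟨⟨a, x⟩, b, y⟩ h
    dsimp only at h ⊢
    obtain ⟨⟨⟨⟨ha, hx⟩, hb, hy⟩, rfl⟩, rfl⟩ := h
    exact ⟨⟨by ring, by positivity⟩, by omega, by omega⟩
  · rintro ⟨⟨a, e⟩, x⟩ ⟨⟨rfl, h₀⟩, hx, hxe⟩
    have ha := Nat.pos_of_ne_zero (left_ne_zero_of_mul h₀)
    refine ⟨⟨by omega, ?_⟩, trivial⟩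
    rw [← mul_add, Nat.add_sub_cancel' hxe.le]
  all_goals grind

theorem sum_liouvilleQuadruples_snd_eq (f : ℕ → ℕ → M) (n : ℕ) :
    ∑ t ∈ liouvilleQuadruples n with t.1.2 = t.2.2, f t.1.1 (t.1.1 + t.2.1) =
      ∑ p ∈ n.divisorsAntidiagonal, ∑ a ∈ Ico 1 p.1, f a p.1 := by
  rw [sum_sigma']
  refine sum_nbij' (fun t ↦ ⟨(t.1.1 + t.2.1, t.1.2), t.1.1⟩)
    (fun s ↦ ((s.2, s.1.2), (s.1.1 - s.2, s.1.2))) ?_ ?_ ?_ ?_ ?_ <;>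
  simp only [mem_filter, mem_liouvilleQuadruples, mem_sigma, Nat.mem_divisorsAntidiagonal, mem_Ico]
  · rintro ⟨⟨a, x⟩, b, y⟩ h
    dsimp only at h ⊢
    obtain ⟨⟨⟨⟨ha, hx⟩, hb, hy⟩, rfl⟩, rfl⟩ := h
    exact ⟨⟨by ring, by positivity⟩, by omega, by omega⟩
  · rintro ⟨⟨d, x⟩, a⟩ ⟨⟨rfl, h₀⟩, ha, had⟩
    have hx := Nat.pos_of_ne_zero (right_ne_zero_of_mul h₀)
    refine ⟨⟨by omega, ?_⟩, trivial⟩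
    rw [← add_mul, Nat.add_sub_cancel' had.le]
  all_goals grind

end AddCommMonoid

theorem sum_liouvilleQuadruples_sub {M : Type*} [AddCommGroup M] {f : ℕ → ℕ → M}
    (hf : ∀ a b, f a b = f b a) (hf' : ∀ a b, f a (a + b) = f b (b + a)) (n : ℕ) :
    ∑ t ∈ liouvilleQuadruples n, (f t.1.1 t.2.1 - f t.1.1 (t.1.1 + t.2.1)) =
      ∑ p ∈ n.divisorsAntidiagonal,
        ((p.2 - 1) • f p.1 p.1 - ∑ a ∈ Ico 1 p.1, f a p.1) := by
  have hfst := sum_liouvilleQuadruples_eq_two_nsmul_add hf n Prod.fst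
  have hsnd := sum_liouvilleQuadruples_eq_two_nsmul_add hf' n Prod.snd
  have hlt := sum_liouvilleQuadruples_lt_comm (fun a b ↦ f a (a + b)) n Prod.snd
  simp only [fun t : (ℕ × ℕ) × ℕ × ℕ ↦ hf' t.2.1 t.1.1] at hlt
  rw [sum_sub_distrib, sum_sub_distrib, hfst, hsnd, ← hlt, sum_liouvilleQuadruples_shear,
    sum_liouvilleQuadruples_fst_eq, sum_liouvilleQuadruples_snd_eq, add_sub_add_left_eq_sub]

end Liouville

section HexForm

/-- The form `κ(u, v)uv + κ(v, w)vw + κ(w, u)wu` on the triples `(u, v, w)` with `u + v + w = 0`,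
as a function of `u` and `v`. For symmetric even `κ` it is invariant under the symmetries of the
hexagonal lattice, which are generated by the permutations of `u`, `v`, `w` and negation. -/
def hexForm {R : Type*} [CommRing R] (κ : R → R → R) (u v : R) : R :=
  κ u v * (u * v) + κ v (-(u + v)) * (v * -(u + v)) + κ (-(u + v)) u * (-(u + v) * u)

variable {R : Type*} [CommRing R] {κ : R → R → R}

theorem hexForm_comm (hκ : ∀ u v, κ u v = κ v u) (u v : R) : hexForm κ u v = hexForm κ v u := by
  simp only [hexForm, add_comm v u, hκ v u, hκ (-(u + v))]
  ring

theorem hexForm_rotate (κ : R → R → R) (u v : R) : hexForm κ u v = hexForm κ v (-(u + v)) := by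
  simp only [hexForm, show -(v + -(u + v)) = u by ring]
  ring

theorem hexForm_neg_neg (hκ : ∀ u v, κ (-u) (-v) = κ u v) (u v : R) :
    hexForm κ (-u) (-v) = hexForm κ u v := by
  simp only [hexForm, ← neg_add, hκ]
  ring

end HexForm

section Mod5HexForm

/-- The indicator function of the residues `±2` modulo 5, which are the admissible parts. -/
def mod5Indicator (x : ZMod 5) : ℤ := if x = 2 ∨ x = 3 then 1 else 0

/-- The coefficients of `mod5HexForm`, chosen so as to satisfy
`two_mul_mod5Kernel_sub_add_sub` while being symmetric and even. -/
def mod5Kernel (x y : ZMod 5) : ℤ :=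
  2 * (x + y).valMinAbs ^ 2 + 5 * mod5Indicator x * if x + y = 0 then 1 else 0

theorem mod5Kernel_comm : ∀ x y, mod5Kernel x y = mod5Kernel y x := by decide

theorem mod5Kernel_neg_neg : ∀ x y, mod5Kernel (-x) (-y) = mod5Kernel x y := by decide

theorem two_mul_mod5Kernel_sub_add_sub : ∀ x y,
    2 * mod5Kernel x (y - x) + 2 * mod5Kernel y (x - y) - mod5Kernel x y - mod5Kernel x (-y) =
      5 * (mod5Indicator x * mod5Indicator y + 2 * mod5Indicator x + 2 * mod5Indicator y) := by
  decide

/-- The hexagonally symmetric form, with coefficients depending on residues modulo 5, to which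
Liouville's summation is applied. -/
def mod5HexForm : ℤ → ℤ → ℤ := hexForm fun u v ↦ mod5Kernel u v

theorem mod5HexForm_comm (a b : ℤ) : mod5HexForm a b = mod5HexForm b a :=
  hexForm_comm (fun _ _ ↦ mod5Kernel_comm _ _) a b

theorem mod5HexForm_neg_right_comm (a b : ℤ) : mod5HexForm a (-b) = mod5HexForm b (-a) := by
  have h := hexForm_neg_neg (κ := fun u v : ℤ ↦ mod5Kernel u v)
    (fun u v ↦ by push_cast; exact mod5Kernel_neg_neg u v) b (-a)
  rw [mod5HexForm_comm, mod5HexForm, ← h, neg_neg]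

theorem mod5HexForm_neg_add (a b : ℤ) : mod5HexForm a (-(a + b)) = mod5HexForm a b := by
  rw [add_comm, mod5HexForm, ← hexForm_rotate, ← mod5HexForm, mod5HexForm_comm]

theorem mod5HexForm_self_neg (d : ℤ) :
    mod5HexForm d (-d) = -(5 * (d ^ 2 * mod5Indicator d)) := by
  have h : ∀ x, mod5Kernel x (-x) = 5 * mod5Indicator x := by decide
  rw [mod5HexForm, hexForm, add_neg_cancel, Int.cast_neg, h]
  ring

theorem mod5HexForm_zero_neg (d : ℤ) :
    mod5HexForm 0 (-d) = -(5 * (d ^ 2 * mod5Indicator d)) := by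
  rw [mod5HexForm_neg_right_comm, neg_zero, ← mod5HexForm_neg_add, add_zero, mod5HexForm_self_neg]

theorem mod5HexForm_neg_right_sub (a b : ℤ) :
    mod5HexForm a (-b) - mod5HexForm a b = 5 * (a * b) *
      (mod5Indicator a * mod5Indicator b + 2 * mod5Indicator a + 2 * mod5Indicator b) := by
  have h₁ : ∀ x y, mod5Kernel (-y) (-(x + -y)) = mod5Kernel y (x - y) := by decide
  have h₂ : ∀ x y, mod5Kernel (-(x + -y)) x = mod5Kernel x (y - x) := by decide
  have h₃ : ∀ x y, mod5Kernel y (-(x + y)) = mod5Kernel y (x - y) := by decide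
  have h₄ : ∀ x y, mod5Kernel (-(x + y)) x = mod5Kernel x (y - x) := by decide
  simp only [mod5HexForm, hexForm]
  push_cast
  rw [h₁, h₂, h₃, h₄]
  linear_combination a * b * two_mul_mod5Kernel_sub_add_sub a b

end Mod5HexForm

section Moments

theorem sum_range_sub_mul_eq_of_second_difference {R : Type*} [CommRing R] {g G : ℕ → R}
    (h₀ : G 0 = 0) (h₁ : G 1 = g 0) (h : ∀ n, G (n + 2) - 2 * G (n + 1) + G n = g (n + 1))
    (n : ℕ) : ∑ a ∈ range n, ((n : R) - a) * g a = G n := by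
  have hsum (n : ℕ) : ∑ a ∈ range (n + 1), g a = G (n + 1) - G n := by
    induction n with
    | zero => simp [h₀, h₁]
    | succ n ih => rw [sum_range_succ, ih]; linear_combination -h n
  induction n with
  | zero => simp [h₀]
  | succ n ih =>
    have hterm (a : ℕ) : (((n + 1 : ℕ) : R) - a) * g a = (n - a) * g a + g a := by
      push_cast
      ring
    simp only [hterm]
    rw [sum_add_distrib, hsum, sum_range_succ, ih]
    ring

theorem six_mul_sum_range_sub_mul_self (n : ℕ) :
    6 * ∑ a ∈ range n, ((n : ℤ) - a) * a = n ^ 3 - n := by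
  simp_rw [mul_sum, mul_left_comm (6 : ℤ)]
  refine sum_range_sub_mul_eq_of_second_difference (G := fun n ↦ (n : ℤ) ^ 3 - n)
    (by simp) (by simp) (fun n ↦ ?_) n
  push_cast
  ring

theorem sum_range_sub_mul_valMinAbs_sq (n : ℕ) :
    ∑ a ∈ range n, ((n : ℤ) - a) * (a : ZMod 5).valMinAbs ^ 2 =
      n ^ 2 - (n : ZMod 5).valMinAbs ^ 2 + mod5Indicator n := by
  refine sum_range_sub_mul_eq_of_second_difference
    (G := fun n ↦ (n : ℤ) ^ 2 - (n : ZMod 5).valMinAbs ^ 2 + mod5Indicator n)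
    (by decide) (by decide) (fun n ↦ ?_) n
  have h : ∀ x : ZMod 5, (2 : ℤ) -
      ((x + 2).valMinAbs ^ 2 - 2 * (x + 1).valMinAbs ^ 2 + x.valMinAbs ^ 2) +
      (mod5Indicator (x + 2) - 2 * mod5Indicator (x + 1) + mod5Indicator x) =
        (x + 1).valMinAbs ^ 2 := by decide
  push_cast
  linear_combination h n

theorem ten_mul_sum_range_sub_of_cast_eq_zero (n : ℕ) :
    10 * ∑ a ∈ range n, ((n : ℤ) - a) * (if (a : ZMod 5) = 0 then 1 else 0) =
      n ^ 2 + 5 * n + 4 * (n : ZMod 5).valMinAbs ^ 2 - 10 * mod5Indicator n := by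
  simp_rw [mul_sum, mul_left_comm (10 : ℤ)]
  refine sum_range_sub_mul_eq_of_second_difference (G := fun n ↦
    (n : ℤ) ^ 2 + 5 * n + 4 * (n : ZMod 5).valMinAbs ^ 2 - 10 * mod5Indicator n)
    (by decide) (by decide) (fun n ↦ ?_) n
  have h : ∀ x : ZMod 5, (2 : ℤ) +
      4 * ((x + 2).valMinAbs ^ 2 - 2 * (x + 1).valMinAbs ^ 2 + x.valMinAbs ^ 2) -
      10 * (mod5Indicator (x + 2) - 2 * mod5Indicator (x + 1) + mod5Indicator x) =
        10 * (if x + 1 = 0 then 1 else 0) := by decide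
  push_cast
  linear_combination h n

theorem fifteen_mul_sum_range_sub_mul_mod5Indicator (n : ℕ) :
    15 * ∑ a ∈ range n, ((n : ℤ) - a) * (a * mod5Indicator a) =
      n ^ 3 + 11 * n - 3 * n * (n : ZMod 5).valMinAbs ^ 2 - 9 * (n : ZMod 5).valMinAbs +
        6 * (n : ZMod 5).valMinAbs * mod5Indicator n := by
  simp_rw [mul_sum, mul_left_comm (15 : ℤ)]
  refine sum_range_sub_mul_eq_of_second_difference (G := fun n ↦
    (n : ℤ) ^ 3 + 11 * n - 3 * n * (n : ZMod 5).valMinAbs ^ 2 - 9 * (n : ZMod 5).valMinAbs +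
      6 * (n : ZMod 5).valMinAbs * mod5Indicator n)
    (by decide) (by decide) (fun n ↦ ?_) n
  have hlinear : ∀ x : ZMod 5, (6 : ℤ) -
      3 * ((x + 2).valMinAbs ^ 2 - 2 * (x + 1).valMinAbs ^ 2 + x.valMinAbs ^ 2) =
        15 * mod5Indicator (x + 1) := by decide
  have hconst : ∀ x : ZMod 5, -3 * ((x + 2).valMinAbs ^ 2 - x.valMinAbs ^ 2) -
      9 * ((x + 2).valMinAbs - 2 * (x + 1).valMinAbs + x.valMinAbs) +
      6 * ((x + 2).valMinAbs * mod5Indicator (x + 2) -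
        2 * ((x + 1).valMinAbs * mod5Indicator (x + 1)) + x.valMinAbs * mod5Indicator x) =
        0 := by decide
  push_cast
  linear_combination (n + 1) * hlinear n + hconst n

theorem sum_range_succ_mod5HexForm (d : ℕ) :
    ∑ a ∈ range (d + 1), mod5HexForm a (-d) = ∑ a ∈ range d, ((d : ℤ) - a) *
      (mod5Kernel (d - a) a * a - 2 * (mod5Kernel (d - a) (-d) * d)) := by
  have hflip : ∑ a ∈ range (d + 1), mod5Kernel a (-d) * ((a : ℤ) * d) =
      ∑ a ∈ range (d + 1), mod5Kernel (d - a) (-d) * (((d : ℤ) - a) * d) := by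
    rw [← sum_flip]
    refine sum_congr rfl fun a ha ↦ ?_
    rw [Nat.cast_sub (mem_range_succ_iff.1 ha), Nat.cast_sub (mem_range_succ_iff.1 ha)]
  have hterm (a : ℕ) : mod5HexForm a (-d) =
      ((d : ℤ) - a) * (mod5Kernel (d - a) a * a - mod5Kernel (d - a) (-d) * d) -
        mod5Kernel a (-d) * ((a : ℤ) * d) := by
    have h₁ : ∀ x y, mod5Kernel (-y) (-(x + -y)) = mod5Kernel (y - x) (-y) := by decide
    have h₂ : ∀ x y, mod5Kernel (-(x + -y)) x = mod5Kernel (y - x) x := by decide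
    simp only [mod5HexForm, hexForm]
    push_cast
    rw [h₁, h₂]
    ring
  simp only [hterm, sum_sub_distrib, hflip]
  rw [← sum_sub_distrib, sum_range_succ, sub_self, zero_mul, zero_mul, mul_zero, sub_zero, add_zero]
  exact sum_congr rfl fun a _ ↦ by ring

theorem sum_range_succ_mod5HexForm_eq_moments (d : ℕ) :
    ∑ a ∈ range (d + 1), mod5HexForm a (-d) =
      2 * (d : ZMod 5).valMinAbs ^ 2 * ∑ a ∈ range d, ((d : ℤ) - a) * a +
      5 * (if (d : ZMod 5) = 0 then 1 else 0) *
        ∑ a ∈ range d, ((d : ℤ) - a) * (a * mod5Indicator a) -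
      4 * d * ∑ a ∈ range d, ((d : ℤ) - a) * (a : ZMod 5).valMinAbs ^ 2 -
      10 * (d * mod5Indicator d) *
        ∑ a ∈ range d, ((d : ℤ) - a) * if (a : ZMod 5) = 0 then 1 else 0 := by
  have h₁ : ∀ x y, mod5Kernel (y - x) x =
      2 * y.valMinAbs ^ 2 + 5 * mod5Indicator x * if y = 0 then 1 else 0 := by decide
  have h₂ : ∀ x y, mod5Kernel (y - x) (-y) =
      2 * x.valMinAbs ^ 2 + 5 * mod5Indicator y * if x = 0 then 1 else 0 := by decide
  simp only [sum_range_succ_mod5HexForm, h₁, h₂, mul_sum, ← sum_add_distrib, ← sum_sub_distrib]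
  exact sum_congr rfl fun a _ ↦ by ring

theorem three_mul_sum_range_succ_mod5HexForm (d : ℕ) :
    3 * ∑ a ∈ range (d + 1), mod5HexForm a (-d) =
      3 * (d * mod5Indicator d) - 15 * (d ^ 2 * mod5Indicator d) - 11 * ((d : ℤ) ^ 3 - d) := by
  have hself := six_mul_sum_range_sub_mul_self d
  have hind := fifteen_mul_sum_range_sub_mul_mod5Indicator d
  have hsq := sum_range_sub_mul_valMinAbs_sq d
  have hzero := ten_mul_sum_range_sub_of_cast_eq_zero d
  have hcases : ∀ x : ZMod 5,
      ((if x = 0 then (1 : ℤ) else 0) = 1 ∧ x.valMinAbs = 0 ∧ mod5Indicator x = 0) ∨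
      ((if x = 0 then (1 : ℤ) else 0) = 0 ∧ x.valMinAbs ^ 2 = 1 ∧ mod5Indicator x = 0) ∨
      ((if x = 0 then (1 : ℤ) else 0) = 0 ∧ x.valMinAbs ^ 2 = 4 ∧ mod5Indicator x = 1) := by
    decide
  rw [sum_range_succ_mod5HexForm_eq_moments]
  obtain ⟨hδ, hv, hχ⟩ | ⟨hδ, hv, hχ⟩ | ⟨hδ, hv, hχ⟩ := hcases d
  · rw [hv, hχ] at hind hsq
    rw [hδ, hv, hχ]
    linear_combination hind - 12 * d * hsq
  · rw [hv, hχ] at hsq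
    rw [hδ, hv, hχ]
    linear_combination hself - 12 * d * hsq
  · rw [hv, hχ] at hsq hzero
    rw [hδ, hv, hχ]
    linear_combination 4 * hself - 12 * d * hsq - 3 * d * hzero

theorem three_mul_sum_Ico_mod5HexForm (d : ℕ) :
    3 * ∑ a ∈ Ico 1 d, mod5HexForm a (-d) =
      3 * (d * mod5Indicator d) + 15 * (d ^ 2 * mod5Indicator d) - 11 * ((d : ℤ) ^ 3 - d) := by
  obtain rfl | hd := d.eq_zero_or_pos
  · simp
  have h := three_mul_sum_range_succ_mod5HexForm d
  rw [sum_range_succ, range_eq_Ico, sum_eq_sum_Ico_succ_bot hd, Nat.cast_zero,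
    mod5HexForm_zero_neg, mod5HexForm_self_neg, Int.cast_natCast] at h
  linear_combination h

end Moments

section DifferentialEquations

theorem three_mul_sum_liouvilleQuadruples_mod5HexForm (n : ℕ) :
    3 * ∑ t ∈ liouvilleQuadruples n,
        (mod5HexForm t.1.1 (-t.2.1) - mod5HexForm t.1.1 t.2.1) =
      ∑ d ∈ n.divisors, (11 * ((d : ℤ) ^ 3 - d) - 3 * (d * mod5Indicator d) -
        15 * (n * (d * mod5Indicator d))) := by
  have hliouville := sum_liouvilleQuadruples_sub (f := fun a b ↦ mod5HexForm a (-b))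
    (fun a b ↦ mod5HexForm_neg_right_comm a b) (fun a b ↦ by
      push_cast
      rw [mod5HexForm_neg_add, mod5HexForm_neg_add, mod5HexForm_comm]) n
  push_cast [mod5HexForm_neg_add] at hliouville
  rw [hliouville, mul_sum, ← Nat.sum_divisorsAntidiagonal fun d _ ↦
    11 * ((d : ℤ) ^ 3 - d) - 3 * (d * mod5Indicator d) - 15 * (n * (d * mod5Indicator d))]
  refine sum_congr rfl fun p hp ↦ ?_
  obtain ⟨rfl, hp⟩ := Nat.mem_divisorsAntidiagonal.1 hp
  have hpos := Nat.pos_of_ne_zero (right_ne_zero_of_mul hp)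
  rw [mod5HexForm_self_neg, nsmul_eq_mul, Nat.cast_pred hpos]
  push_cast
  linear_combination -three_mul_sum_Ico_mod5HexForm p.1

/-- The generating function of the sums of the divisors `≡ ±2 (mod 5)`, which is the logarithmic
derivative of `mod5PartSeries`. -/
noncomputable def mod5LambertSeries : ℤ⟦X⟧ := lambertSeries fun d ↦ d * mod5Indicator d

theorem mod5LambertSeries_riccati :
    15 * eulerDerivation ℤ mod5LambertSeries + 15 * mod5LambertSeries ^ 2 +
        3 * mod5LambertSeries =
      11 * (lambertSeries (fun d ↦ (d : ℤ) ^ 3) - lambertSeries fun d ↦ (d : ℤ)) -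
        60 * (lambertSeries (fun d ↦ (d : ℤ)) * mod5LambertSeries) := by
  have hquadratic : 15 * (mod5LambertSeries * mod5LambertSeries) +
      30 * (mod5LambertSeries * lambertSeries fun d ↦ (d : ℤ)) +
      30 * (lambertSeries (fun d ↦ (d : ℤ)) * mod5LambertSeries) =
      11 * (lambertSeries (fun d ↦ (d : ℤ) ^ 3) - lambertSeries fun d ↦ (d : ℤ)) -
        3 * mod5LambertSeries - 15 * eulerDerivation ℤ mod5LambertSeries := by
    ext n
    have h := three_mul_sum_liouvilleQuadruples_mod5HexForm n
    simp only [← map_ofNat (C (R := ℤ)), map_add, map_sub, coeff_C_mul, coeff_eulerDerivation,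
      mod5LambertSeries, coeff_lambertSeries_mul_lambertSeries]
    simp only [lambertSeries, coeff_mk, mod5HexForm_neg_right_sub, Int.cast_natCast, mul_sum,
      ← sum_add_distrib, ← sum_sub_distrib] at h ⊢
    rw [← h]
    exact sum_congr rfl fun t _ ↦ by ring
  linear_combination hquadratic

/-- The generating function of `mod5PartCount`. -/
noncomputable def mod5PartSeries : ℤ⟦X⟧ := mk fun n ↦ (mod5PartCount n : ℤ)

theorem mod5PartCount_eq_card_restricted (n : ℕ) :
    mod5PartCount n = #(Nat.Partition.restricted n fun d ↦ d % 5 = 2 ∨ d % 5 = 3) := by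
  rw [mod5PartCount, Nat.card_eq_fintype_card, Fintype.card_subtype]
  rfl

theorem natCast_mul_mod5Indicator (d : ℕ) :
    d * mod5Indicator d = if d % 5 = 2 ∨ d % 5 = 3 then (d : ℤ) else 0 := by
  have h₂ : (d : ZMod 5) = 2 ↔ d % 5 = 2 := ZMod.natCast_eq_natCast_iff' d 2 5
  have h₃ : (d : ZMod 5) = 3 ↔ d % 5 = 3 := ZMod.natCast_eq_natCast_iff' d 3 5
  simp only [mod5Indicator, h₂, h₃, mul_ite, mul_one, mul_zero]

theorem eulerDerivation_mod5PartSeries :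
    eulerDerivation ℤ mod5PartSeries = mod5LambertSeries * mod5PartSeries := by
  simp only [mod5PartSeries, mod5LambertSeries, mod5PartCount_eq_card_restricted,
    natCast_mul_mod5Indicator]
  exact eulerDerivation_mk_card_restricted ℤ fun d ↦ d % 5 = 2 ∨ d % 5 = 3

theorem mod5PartSeries_differential_equation :
    15 * eulerDerivation ℤ (eulerDerivation ℤ mod5PartSeries) +
        3 * eulerDerivation ℤ mod5PartSeries =
      11 * (lambertSeries (fun d ↦ (d : ℤ) ^ 3) * mod5PartSeries -
        lambertSeries (fun d ↦ (d : ℤ)) * mod5PartSeries) -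
        60 * (lambertSeries (fun d ↦ (d : ℤ)) * eulerDerivation ℤ mod5PartSeries) := by
  rw [eulerDerivation_mod5PartSeries, Derivation.leibniz, eulerDerivation_mod5PartSeries,
    smul_eq_mul, smul_eq_mul]
  linear_combination mod5PartSeries * mod5LambertSeries_riccati

end DifferentialEquations

end

/-- Recursion for the coefficients of the first Rogers–Ramanujan product:
`(15n²+3n)a(n) = 11∑_{k<n}(σ₃(n-k)-σ₁(n-k))a(k) - 60∑_{k<n} k a(k) σ₁(n-k)`. -/
theorem mod5PartCount_recursion (n : ℕ) (hn : 1 ≤ n) :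
    ((15 * n ^ 2 + 3 * n : ℕ) : ℤ) * mod5PartCount n
      = 11 * ∑ k ∈ Finset.range n,
            ((∑ d ∈ (n - k).divisors, (d : ℤ) ^ 3) - ∑ d ∈ (n - k).divisors, (d : ℤ))
              * mod5PartCount k
        - 60 * ∑ k ∈ Finset.range n,
            (k : ℤ) * mod5PartCount k * ∑ d ∈ (n - k).divisors, (d : ℤ) := by
  have h := congrArg (PowerSeries.coeff n) mod5PartSeries_differential_equation
  simp only [← map_ofNat (PowerSeries.C (R := ℤ)), map_add, map_sub, PowerSeries.coeff_C_mul,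
    coeff_lambertSeries_mul, coeff_eulerDerivation, mod5PartSeries, PowerSeries.coeff_mk] at h
  simp only [sub_mul, Finset.sum_sub_distrib, mul_comm (_ * _) (∑ _ ∈ _, _)]
  push_cast
  linear_combination h
end
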